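/- Every quaternion matrix A ∈ ℍ^{n×n} (n ≥ 1) has at least one left eigenvalue: there exist λ ∈ ℍ and x ∈ ℍⁿ with x ≠ 0 such that Ax = λx. -/

import Mathlib

open Quaternion Matrix

/-!
Suppose that `a - q` is invertible for every quaternion `q`, both regarded as real
endomorphisms. Rescaling, so is `x - t a` for all quaternions `x` and real `t ≠ 0`. With
`h = (x - t a)⁻¹`, the 3-form `τ ((h dx)³)`, where `τ` is the trace, is closed: its exterior
derivative is a multiple of `τ ((h dx)⁴)`, which vanishes because `τ` is cyclic and a 4-cycle is
an odd permutation. Equivalently, the dual vector field on `ℍ = ℝ⁴` is divergence-free, so its flux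
through the boundary of a cube around the origin is zero. For `t = 0` this field is
`2 τ(1) x / |x|⁴`, which points outward on every face of the cube, and by compactness the field
still points outward for small `t ≠ 0`: a contradiction.
-/

section Divergence

open MeasureTheory Set

theorem setIntegral_Icc_pi_pos {ι : Type*} [Fintype ι] {a b : ι → ℝ} (hab : ∀ i, a i < b i)
    {g : (ι → ℝ) → ℝ} (hg : ContinuousOn g (Icc a b)) (hpos : ∀ x ∈ Icc a b, 0 < g x) :
    0 < ∫ x in Icc a b, g x := by
  rw [setIntegral_pos_iff_support_of_nonneg_ae
    (ae_restrict_of_forall_mem measurableSet_Icc fun x hx => (hpos x hx).le)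
    (hg.integrableOn_compact isCompact_Icc),
    inter_eq_right.2 (show Icc a b ⊆ Function.support g from fun x hx => (hpos x hx).ne'),
    Real.volume_Icc_pi]
  exact CanonicallyOrderedAdd.prod_pos.2 fun i _ => by simpa using hab i

theorem exists_face_not_outward {n : ℕ} {a b : Fin (n + 1) → ℝ} (hab : ∀ i, a i < b i)
    {f : (Fin (n + 1) → ℝ) → Fin (n + 1) → ℝ}
    {f' : (Fin (n + 1) → ℝ) → (Fin (n + 1) → ℝ) →L[ℝ] (Fin (n + 1) → ℝ)}
    (hc : ContinuousOn f (Icc a b))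
    (hf : ∀ x ∈ Set.pi univ fun i => Ioo (a i) (b i), HasFDerivAt f (f' x) x)
    (hdiv : ∀ x ∈ Icc a b, ∑ i, f' x (Pi.single i 1) i = 0) :
    ∃ i, ∃ x ∈ Icc a b, (x i = a i ∧ 0 ≤ f x i) ∨ (x i = b i ∧ f x i ≤ 0) := by
  by_contra! hout
  have hflux := integral_divergence_of_hasFDerivAt_off_countable a b (fun i => (hab i).le) f f' ∅
    countable_empty hc (fun x hx => hf x hx.1)
    (integrableOn_zero.congr_fun (fun x hx => (hdiv x hx).symm) measurableSet_Icc)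
  rw [setIntegral_eq_zero_of_forall_eq_zero hdiv] at hflux
  refine hflux.not_lt (Finset.sum_pos (fun i _ => ?_) Finset.univ_nonempty)
  have hface : ∀ s ∈ Icc (a i) (b i), ∀ y ∈ Icc (a ∘ i.succAbove) (b ∘ i.succAbove),
      i.insertNth s y ∈ Icc a b := fun s hs y hy => Fin.insertNth_mem_Icc.2 ⟨hs, hy⟩
  have hcont : ∀ s ∈ Icc (a i) (b i), ContinuousOn
      (fun y => f (i.insertNth s y) i) (Icc (a ∘ i.succAbove) (b ∘ i.succAbove)) := fun s hs =>
    (continuousOn_pi.1 hc i).comp ((continuous_const (y := s)).finInsertNth i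
      (A := fun _ => ℝ) continuous_id).continuousOn (hface s hs)
  have hfront := setIntegral_Icc_pi_pos (fun j => hab (i.succAbove j))
    (hcont (b i) (right_mem_Icc.2 (hab i).le)) fun y hy =>
      (hout i _ (hface _ (right_mem_Icc.2 (hab i).le) y hy)).2 (by simp)
  have hback := setIntegral_Icc_pi_pos (fun j => hab (i.succAbove j))
    (hcont (a i) (left_mem_Icc.2 (hab i).le)).neg fun y hy =>
      neg_pos.2 ((hout i _ (hface _ (left_mem_Icc.2 (hab i).le) y hy)).1 (by simp))
  simp only [Pi.neg_apply, integral_neg] at hback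
  exact sub_pos.2 ((neg_pos.1 hback).trans hfront)

end Divergence

section TraceForm

variable {R : Type*} [NormedRing R] [NormedAlgebra ℝ R]

/-- The 3-form `τ ((h dx)³)` evaluated at `(a, b, c)`, up to a factor 3: for tracial `τ` the six
orderings of `a, b, c` fall into two classes under cyclic rotation, and one representative of each
is kept. -/
noncomputable def traceForm (τ : R →L[ℝ] ℝ) (h a b c : R) : ℝ :=
  τ (h * a * (h * b) * (h * c)) - τ (h * a * (h * c) * (h * b))

/-- The components of the vector field on `ℝ⁴` dual to the 3-form `traceForm τ h`, where `E` lists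
the images of the coordinate directions. The overall sign is chosen so that for `h = x⁻¹`, with
`x` a quaternion and `0 < τ 1`, the field points away from the origin. -/
noncomputable def traceField (τ : R →L[ℝ] ℝ) (E : Fin 4 → R) (h : R) : Fin 4 → ℝ :=
  ![-traceForm τ h (E 1) (E 2) (E 3), traceForm τ h (E 0) (E 2) (E 3),
    -traceForm τ h (E 0) (E 1) (E 3), traceForm τ h (E 0) (E 1) (E 2)]

theorem differentiable_traceForm (τ : R →L[ℝ] ℝ) (a b c : R) :
    Differentiable ℝ fun h => traceForm τ h a b c := by
  unfold traceForm
  fun_prop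

theorem differentiable_traceField (τ : R →L[ℝ] ℝ) (E : Fin 4 → R) :
    Differentiable ℝ (traceField τ E) := by
  have hform := differentiable_traceForm τ
  refine differentiable_pi.2 fun i => ?_
  fin_cases i
  exacts [(hform _ _ _).neg, hform _ _ _, (hform _ _ _).neg, hform _ _ _]

theorem fderiv_map_mul_cubic (τ : R →L[ℝ] ℝ) (h a b c v : R) :
    fderiv ℝ (fun k => τ (k * a * (k * b) * (k * c))) h v =
      τ (v * a * (h * b) * (h * c)) + τ (h * a * (v * b) * (h * c)) +
        τ (h * a * (h * b) * (v * c)) := by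
  have hmul : ∀ d, HasFDerivAt (fun k => k * d) _ h := fun d =>
    (hasFDerivAt_id (𝕜 := ℝ) h).mul_const' d
  have hcubic := τ.hasFDerivAt.comp h (((hmul a).mul' (hmul b)).mul' (hmul c))
  refine (congrArg (· v) hcubic.fderiv).trans ?_
  simp [mul_assoc, add_comm]

theorem fderiv_traceForm (τ : R →L[ℝ] ℝ) (h a b c v : R) :
    fderiv ℝ (fun k => traceForm τ k a b c) h v =
      τ (v * a * (h * b) * (h * c)) + τ (h * a * (v * b) * (h * c)) +
          τ (h * a * (h * b) * (v * c)) -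
        (τ (v * a * (h * c) * (h * b)) + τ (h * a * (v * c) * (h * b)) +
          τ (h * a * (h * c) * (v * b))) := by
  unfold traceForm
  rw [fderiv_fun_sub (by fun_prop) (by fun_prop), _root_.sub_apply, fderiv_map_mul_cubic,
    fderiv_map_mul_cubic]

theorem sum_fderiv_traceField {τ : R →L[ℝ] ℝ} (hτ : ∀ x y, τ (x * y) = τ (y * x))
    (E : Fin 4 → R) (h : R) : ∑ i, fderiv ℝ (traceField τ E) h (h * E i * h) i = 0 := by
  have hcoord : ∀ i v, fderiv ℝ (traceField τ E) h v i =
      fderiv ℝ (fun k => traceField τ E k i) h v := fun i v => by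
    rw [fderiv_apply (differentiable_traceField τ E h)]
    rfl
  have rotate : ∀ a b c d, τ (h * (a * (h * (b * (h * (c * (h * d))))))) =
      τ (h * (b * (h * (c * (h * (d * (h * a))))))) := fun a b c d => by
    simpa only [mul_assoc] using hτ (h * a) (h * b * (h * c) * (h * d))
  -- Rotating `E 0` to the front makes the terms of the divergence cancel in pairs.
  have rotate₂ := fun a b c => rotate a (E 0) b c
  have rotate₃ := fun a b c => (rotate a b (E 0) c).trans (rotate₂ b c a)
  simp only [hcoord, Fin.sum_univ_four, traceField, Matrix.cons_val, fderiv_fun_neg,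
    _root_.neg_apply, fderiv_traceForm, mul_assoc, rotate₂, rotate₃]
  ring

theorem hasFDerivAt_inverse_sub [CompleteSpace R] {F : Type*} [NormedAddCommGroup F]
    [NormedSpace ℝ F] (S : F →L[ℝ] R) (c : R) {x : F} (hx : IsUnit (S x - c)) :
    HasFDerivAt (fun y => Ring.inverse (S y - c))
      ((-ContinuousLinearMap.mulLeftRight ℝ R (Ring.inverse (S x - c))
        (Ring.inverse (S x - c))).comp S) x := by
  obtain ⟨u, hu⟩ := hx
  have hinv := hasFDerivAt_ringInverse (𝕜 := ℝ) u
  rw [← Ring.inverse_unit, hu] at hinv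
  exact hinv.comp x (S.hasFDerivAt.sub_const c)

/-- The vector field `traceField` on `ℝ⁴` at the resolvent `h = (S x - c)⁻¹`, where `S` maps `ℝ⁴`
into the algebra `R`. Since `Ring.inverse` is `0` at non-units, the value is `0` where `S x - c`
is not invertible. -/
noncomputable def resolventField (τ : R →L[ℝ] ℝ) (S : (Fin 4 → ℝ) →L[ℝ] R) (c : R)
    (x : Fin 4 → ℝ) : Fin 4 → ℝ :=
  traceField τ (fun j => S (Pi.single j 1)) (Ring.inverse (S x - c))

theorem hasFDerivAt_resolventField [CompleteSpace R] (τ : R →L[ℝ] ℝ) (S : (Fin 4 → ℝ) →L[ℝ] R)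
    (c : R) {x : Fin 4 → ℝ} (hx : IsUnit (S x - c)) :
    HasFDerivAt (resolventField τ S c)
      ((fderiv ℝ (traceField τ fun j => S (Pi.single j 1)) (Ring.inverse (S x - c))).comp
        ((-ContinuousLinearMap.mulLeftRight ℝ R (Ring.inverse (S x - c))
          (Ring.inverse (S x - c))).comp S)) x :=
  (differentiable_traceField τ _ _).hasFDerivAt.comp x (hasFDerivAt_inverse_sub S c hx)

theorem sum_fderiv_resolventField [CompleteSpace R] {τ : R →L[ℝ] ℝ}
    (hτ : ∀ x y, τ (x * y) = τ (y * x)) (S : (Fin 4 → ℝ) →L[ℝ] R) (c : R) {x : Fin 4 → ℝ}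
    (hx : IsUnit (S x - c)) :
    ∑ i, fderiv ℝ (resolventField τ S c) x (Pi.single i 1) i = 0 := by
  rw [(hasFDerivAt_resolventField τ S c hx).fderiv]
  simpa using sum_fderiv_traceField hτ (fun j => S (Pi.single j 1)) (Ring.inverse (S x - c))

theorem exists_face_resolventField_not_outward [CompleteSpace R] {τ : R →L[ℝ] ℝ}
    (hτ : ∀ x y, τ (x * y) = τ (y * x)) (S : (Fin 4 → ℝ) →L[ℝ] R) (c : R)
    {a b : Fin 4 → ℝ} (hab : ∀ i, a i < b i) (hS : ∀ x ∈ Set.Icc a b, IsUnit (S x - c)) :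
    ∃ i, ∃ x ∈ Set.Icc a b, (x i = a i ∧ 0 ≤ resolventField τ S c x i) ∨
      (x i = b i ∧ resolventField τ S c x i ≤ 0) := by
  have hderiv := fun x hx =>
    (hasFDerivAt_resolventField τ S c (hS x hx)).differentiableAt.hasFDerivAt
  refine exists_face_not_outward hab (fun x hx => (hderiv x hx).continuousAt.continuousWithinAt)
    (fun x hx => hderiv x ?_) fun x hx => sum_fderiv_resolventField hτ S c (hS x hx)
  exact ⟨fun i => (hx i trivial).1.le, fun i => (hx i trivial).2.le⟩

end TraceForm

section Quaternion

/-- The identification of `ℝ⁴` with `ℍ` by the coordinates along `1, i, j, k`, listed in this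
order. -/
def ofCoords : (Fin 4 → ℝ) ≃ₗ[ℝ] ℍ[ℝ] := (QuaternionAlgebra.linearEquivTuple (-1) 0 (-1)).symm

@[simp]
theorem re_ofCoords (x : Fin 4 → ℝ) : (ofCoords x).re = x 0 := rfl

@[simp]
theorem imI_ofCoords (x : Fin 4 → ℝ) : (ofCoords x).imI = x 1 := rfl

@[simp]
theorem imJ_ofCoords (x : Fin 4 → ℝ) : (ofCoords x).imJ = x 2 := rfl

@[simp]
theorem imK_ofCoords (x : Fin 4 → ℝ) : (ofCoords x).imK = x 3 := rfl

theorem ofCoords_symm_apply (q : ℍ[ℝ]) : ofCoords.symm q = ![q.re, q.imI, q.imJ, q.imK] := rfl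

theorem map_eq_re_smul_of_map_mul_comm {M : Type*} [AddCommGroup M] [Module ℝ M]
    {f : ℍ[ℝ] →ₗ[ℝ] M} (hf : ∀ p q, f (p * q) = f (q * p)) (q : ℍ[ℝ]) : f q = q.re • f 1 := by
  let i : ℍ[ℝ] := ofCoords ![0, 1, 0, 0]
  let j : ℍ[ℝ] := ofCoords ![0, 0, 1, 0]
  let k : ℍ[ℝ] := ofCoords ![0, 0, 0, 1]
  -- The real part is the average of the conjugates by `1, i, j, k`, and `f` is
  -- conjugation-invariant.
  have haverage : (4 * q.re) • (1 : ℍ[ℝ]) = q + i * q * -i + j * q * -j + k * q * -k := by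
    ext <;> simp [i, j, k]
    ring
  have hconj : ∀ u : ℍ[ℝ], u * u = -1 → f (u * q * -u) = f q := fun u hu => by
    rw [hf, ← mul_assoc, neg_mul, hu, neg_neg, one_mul]
  have hi : i * i = -1 := by ext <;> simp [i]
  have hj : j * j = -1 := by ext <;> simp [j]
  have hk : k * k = -1 := by ext <;> simp [k]
  have hfour : (4 : ℝ) • f q = (4 : ℝ) • q.re • f 1 := by
    have hmap := congrArg f haverage
    rw [map_smul, map_add, map_add, map_add, hconj i hi, hconj j hj, hconj k hk] at hmap
    rw [smul_smul, hmap]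
    module
  exact smul_right_injective M (four_ne_zero' ℝ) hfour

variable {R : Type*} [NormedRing R] [NormedAlgebra ℝ R]

/-- A homomorphism `φ` from the quaternions, read in real coordinates. -/
noncomputable def coordMap (φ : ℍ[ℝ] →ₐ[ℝ] R) : (Fin 4 → ℝ) →L[ℝ] R :=
  LinearMap.toContinuousLinearMap (φ.toLinearMap ∘ₗ ofCoords.toLinearMap)

theorem coordMap_apply (φ : ℍ[ℝ] →ₐ[ℝ] R) (x : Fin 4 → ℝ) :
    coordMap φ x = φ (ofCoords x) := rfl

theorem traceField_map {τ : R →L[ℝ] ℝ} (hτ : ∀ x y, τ (x * y) = τ (y * x))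
    (φ : ℍ[ℝ] →ₐ[ℝ] R) (p : ℍ[ℝ]) (i : Fin 4) :
    traceField τ (fun j => coordMap φ (Pi.single j 1)) (φ p) i =
      2 * τ 1 * normSq p * ofCoords.symm (star p) i := by
  have hre : ∀ q, τ (φ q) = q.re * τ 1 := fun q => by
    simpa using map_eq_re_smul_of_map_mul_comm (f := τ.toLinearMap ∘ₗ φ.toLinearMap)
      (fun p q => by simpa using hτ (φ p) (φ q)) q
  have hform : ∀ a b c, traceForm τ (φ p) (φ a) (φ b) (φ c) =
      ((p * a * (p * b) * (p * c)).re - (p * a * (p * c) * (p * b)).re) * τ 1 := fun a b c => by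
    simp only [traceForm, ← map_mul, hre, sub_mul]
  fin_cases i <;> simp [traceField, coordMap_apply, hform, normSq_def', ofCoords_symm_apply]
    <;> ring

theorem resolventField_coordMap_zero {τ : R →L[ℝ] ℝ} (hτ : ∀ x y, τ (x * y) = τ (y * x))
    (φ : ℍ[ℝ] →ₐ[ℝ] R) {x : Fin 4 → ℝ} (hx : x ≠ 0) (i : Fin 4) :
    resolventField τ (coordMap φ) 0 x i = 2 * τ 1 * (normSq (ofCoords x))⁻¹ ^ 2 * x i := by
  have hq : ofCoords x ≠ 0 := ofCoords.map_ne_zero_iff.2 hx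
  have hinv : Ring.inverse (coordMap φ x - 0) = φ (ofCoords x)⁻¹ := by
    rw [sub_zero, coordMap_apply]
    exact Ring.inverse_unit ((Units.mk0 (ofCoords x) hq).map (φ : ℍ[ℝ] →* R))
  have hstar : star (ofCoords x)⁻¹ = (normSq (ofCoords x))⁻¹ • ofCoords x := by
    simp [Quaternion.inv_def]
  rw [resolventField, hinv, traceField_map hτ, map_inv₀, hstar, map_smul,
    LinearEquiv.symm_apply_apply, Pi.smul_apply, smul_eq_mul]
  ring

end Quaternion

section Resolvent

open Set Filter Topology

variable {R : Type*} [NormedRing R] [NormedAlgebra ℝ R] [CompleteSpace R]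

theorem continuousAt_resolventField (τ : R →L[ℝ] ℝ) (S : (Fin 4 → ℝ) →L[ℝ] R)
    {c : R} {x : Fin 4 → ℝ} (hx : IsUnit (S x - c)) :
    ContinuousAt (fun p : R × (Fin 4 → ℝ) => resolventField τ S p.1 p.2) (c, x) := by
  obtain ⟨u, hu⟩ := hx
  have hinv : ContinuousAt Ring.inverse (S x - c) := hu ▸ NormedRing.inverse_continuousAt u
  exact (differentiable_traceField τ _).continuous.continuousAt.comp <|
    hinv.comp (f := fun p : R × (Fin 4 → ℝ) => S p.2 - p.1) (x := (c, x)) (by fun_prop)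

theorem eventually_pos_mul_resolventField {τ : R →L[ℝ] ℝ} (hτ : ∀ x y, τ (x * y) = τ (y * x))
    (hτ₁ : 0 < τ 1) (φ : ℍ[ℝ] →ₐ[ℝ] R) {K : Set (Fin 4 → ℝ)} (hK : IsCompact K) {i : Fin 4}
    (hKi : ∀ x ∈ K, x i ≠ 0) :
    ∀ᶠ c in 𝓝 (0 : R), ∀ x ∈ K, 0 < x i * resolventField τ (coordMap φ) c x i := by
  refine hK.eventually_forall_of_forall_eventually fun x hx => ?_
  have hxi := hKi x hx
  have hx₀ : x ≠ 0 := fun h => hxi (by simp [h])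
  have hq : ofCoords x ≠ 0 := ofCoords.map_ne_zero_iff.2 hx₀
  have hunit : IsUnit (coordMap φ x - 0) := by
    simpa only [sub_zero, coordMap_apply] using hq.isUnit.map φ
  have hcont : ContinuousAt (fun p : R × (Fin 4 → ℝ) =>
      p.2 i * resolventField τ (coordMap φ) p.1 p.2 i) (0, x) :=
    ContinuousAt.mul (by fun_prop)
      ((continuous_apply i).continuousAt.comp (continuousAt_resolventField τ (coordMap φ) hunit))
  refine hcont.eventually (lt_mem_nhds ?_)
  have hnorm := normSq_ne_zero.2 hq
  calc 0 < 2 * τ 1 * (normSq (ofCoords x))⁻¹ ^ 2 * x i ^ 2 := by positivity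
    _ = x i * resolventField τ (coordMap φ) 0 x i := by
      rw [resolventField_coordMap_zero hτ φ hx₀]
      ring

theorem exists_not_isUnit_sub_map {τ : R →L[ℝ] ℝ} (hτ : ∀ x y, τ (x * y) = τ (y * x))
    (hτ₁ : τ 1 ≠ 0) (φ : ℍ[ℝ] →ₐ[ℝ] R) (a : R) : ∃ q, ¬ IsUnit (a - φ q) := by
  wlog hpos : 0 < τ 1 generalizing τ
  · exact this (τ := -τ) (by simpa using hτ) (by simpa using hτ₁)
      (neg_pos.2 (hτ₁.lt_of_le (not_lt.1 hpos)))
  by_contra! hunit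
  have hres : ∀ t : ℝ, t ≠ 0 → ∀ x, IsUnit (coordMap φ x - t • a) := fun t ht x => by
    have hscaled := (hunit (t⁻¹ • ofCoords x)).smul (Units.mk0 (-t) (neg_ne_zero.2 ht))
    simpa [smul_sub, coordMap_apply, Units.smul_def, ht, neg_add_eq_sub] using hscaled
  have hface : ∀ᶠ c in 𝓝 (0 : R), ∀ i, ∀ x ∈ Icc (-1 : Fin 4 → ℝ) 1 ∩ {x | |x i| = 1},
      0 < x i * resolventField τ (coordMap φ) c x i := eventually_all.2 fun i =>
    eventually_pos_mul_resolventField hτ hpos φ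
      (isCompact_Icc.inter_right (isClosed_eq (by fun_prop) continuous_const))
      (by rintro x ⟨-, hx⟩ h; simp [h] at hx)
  have hscale : Tendsto (fun t : ℝ => t • a) (𝓝[≠] 0) (𝓝 0) :=
    ((continuous_id.smul continuous_const).tendsto' 0 0 (zero_smul ℝ a)).mono_left
      nhdsWithin_le_nhds
  obtain ⟨t, hout, ht⟩ := ((hscale.eventually hface).and self_mem_nhdsWithin).exists
  obtain ⟨i, x, hx, ⟨hxi, hf⟩ | ⟨hxi, hf⟩⟩ := exists_face_resolventField_not_outward hτ
    (coordMap φ) (t • a) (a := -1) (b := 1) (by simp) fun x _ => hres t ht x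
  all_goals
    have hflow := hout i x ⟨hx, by simp [hxi]⟩
    simp only [hxi, Pi.neg_apply, Pi.one_apply] at hflow
    linarith

end Resolvent

section Module

attribute [local instance] Matrix.linftyOpNormedRing Matrix.linftyOpNormedAlgebra

theorem exists_left_eigenvalue_general {V : Type*} [AddCommGroup V] [Module ℝ V] [Module ℍ[ℝ] V]
    [IsScalarTower ℝ ℍ[ℝ] V] [FiniteDimensional ℝ V] [Nontrivial V] (f : V →ₗ[ℝ] V) :
    ∃ (l : ℍ[ℝ]) (x : V), x ≠ 0 ∧ f x = l • x := by
  have htrace : Matrix.trace (1 : Matrix (Fin (Module.finrank ℝ V)) _ ℝ) ≠ 0 := by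
    simp [(Module.finrank_pos (R := ℝ) (M := V)).ne']
  let toMatrix := LinearMap.toMatrixAlgEquiv (Module.finBasis ℝ V)
  obtain ⟨l, hl⟩ := exists_not_isUnit_sub_map
    (τ := (Matrix.traceLinearMap (Fin (Module.finrank ℝ V)) ℝ ℝ).toContinuousLinearMap)
    Matrix.trace_mul_comm htrace
    (toMatrix.toAlgHom.comp (Algebra.lsmul ℝ ℝ V)) (toMatrix f)
  have hker : LinearMap.ker (f - Algebra.lsmul ℝ ℝ V l) ≠ ⊥ := fun hbot =>
    hl (by simpa using ((LinearMap.isUnit_iff_ker_eq_bot _).2 hbot).map toMatrix)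
  obtain ⟨x, hx, hx₀⟩ := (Submodule.ne_bot_iff _).1 hker
  exact ⟨l, x, hx₀, sub_eq_zero.1 hx⟩

end Module

/-- Wood's theorem: every quaternion matrix `A ∈ ℍ^{n×n}` (with `n ≥ 1`) has at least one
left eigenvalue: there are `λ ∈ ℍ` and `x ∈ ℍⁿ`, `x ≠ 0`, with `A x = λ x`. -/
theorem exists_left_eigenvalue (n : ℕ) (hn : 0 < n) (A : Matrix (Fin n) (Fin n) ℍ[ℝ]) :
    ∃ (l : ℍ[ℝ]) (x : Fin n → ℍ[ℝ]), x ≠ 0 ∧ A.mulVec x = fun k => l * x k :=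
  have : NeZero n := ⟨hn.ne'⟩
  exists_left_eigenvalue_general (A.mulVecBilin ℝ ℝ)
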